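/- Let Σ ∈ S^p and τ > 0, and define the alternating-minimization iterates L^{(k)} = D_τ^+(Σ − D^{(k−1)}), D^{(k)} = pdiag(Σ − L^{(k)}), started from any L^{(0)} ∈ S^p_+ with D^{(0)} = pdiag(Σ − L^{(0)}). Let x_k = (L^{(k)}, D^{(k)}), let x* be the unique minimizer of F(L,D) = τ‖L‖_* + (1/2)‖Σ − (L+D)‖_F² over L ∈ S^p_+ and diagonal D, and let R = max{ ‖vec((L,D) − x*)‖ : F(L,D) ≤ F(x₀), L ∈ S^p_+, D = pdiag(D) }. Then (i) x_k → x* as k → ∞, and (ii) for all k ≥ 1, F(x_{k+1}) − F(x*) ≤ max{ (F(x₀) − F(x*))/2^k , 16R²/k }. -/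

import Mathlib

open Matrix MeasureTheory ProbabilityTheory BigOperators

/-- `pdiag M`: the matrix `M` with all off-diagonal entries set to zero. -/
def pdiag {p : ℕ} (M : Matrix (Fin p) (Fin p) ℝ) : Matrix (Fin p) (Fin p) ℝ :=
  Matrix.of fun i j => if i = j then M i j else 0

/-- `poffdiag M = M - pdiag M`: the off-diagonal part of `M`. -/
def poffdiag {p : ℕ} (M : Matrix (Fin p) (Fin p) ℝ) : Matrix (Fin p) (Fin p) ℝ :=
  M - pdiag M

/-- Frobenius norm of a real matrix. -/
noncomputable def frobNorm {p q : ℕ} (M : Matrix (Fin p) (Fin q) ℝ) : ℝ :=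
  Real.sqrt (∑ i, ∑ j, (M i j) ^ 2)

/-- The singular values of a real matrix (as the square roots of the eigenvalues of `Mᵀ M`,
in no particular order, with multiplicity, padded by zeros). -/
noncomputable def singVals {p q : ℕ} (M : Matrix (Fin p) (Fin q) ℝ) : Fin q → ℝ :=
  fun i => Real.sqrt ((Matrix.posSemidef_conjTranspose_mul_self M).isHermitian.eigenvalues i)

/-- Nuclear norm: sum of the singular values. -/
noncomputable def nucNorm {p q : ℕ} (M : Matrix (Fin p) (Fin q) ℝ) : ℝ :=
  ∑ i, singVals M i

/-- Spectral (operator) norm: the largest singular value. -/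
noncomputable def specNorm {p q : ℕ} (M : Matrix (Fin p) (Fin q) ℝ) : ℝ :=
  ⨆ i, singVals M i

/-- `(2,∞)`-norm: the maximal Euclidean norm of a row. -/
noncomputable def rowNorm {p r : ℕ} (U : Matrix (Fin p) (Fin r) ℝ) : ℝ :=
  ⨆ i, Real.sqrt (∑ j, (U i j) ^ 2)

/-- `sinΘ` distance between two column-orthonormal matrices, measured in spectral norm:
`‖sinΘ(U, V)‖ = ‖U Uᵀ - V Vᵀ‖`. -/
noncomputable def sinTheta {p r : ℕ} (U V : Matrix (Fin p) (Fin r) ℝ) : ℝ :=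
  specNorm (U * Uᵀ - V * Vᵀ)

/-- `eigDesc M k` : the `k`-th largest eigenvalue (1-indexed) of a symmetric matrix `M`. -/
noncomputable def eigDesc {p : ℕ} (M : Matrix (Fin p) (Fin p) ℝ) (k : ℕ) : ℝ :=
  if h : M.IsHermitian then
    (((List.ofFn h.eigenvalues).insertionSort (· ≥ ·)).getD (k - 1) 0)
  else 0

/-- `svDesc M k` : the `k`-th largest singular value (1-indexed) of `M`. -/
noncomputable def svDesc {p q : ℕ} (M : Matrix (Fin p) (Fin q) ℝ) (k : ℕ) : ℝ :=
  (((List.ofFn (singVals M)).insertionSort (· ≥ ·)).getD (k - 1) 0)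

/-- Eigenvalue soft-thresholding operator `D_τ⁺`: for a symmetric matrix
`M = Σᵢ λᵢ uᵢ uᵢᵀ`, `D_τ⁺(M) = Σᵢ max (λᵢ - τ) 0 • uᵢ uᵢᵀ` (junk value `0` otherwise). -/
noncomputable def softThresh {p : ℕ} (τ : ℝ) (M : Matrix (Fin p) (Fin p) ℝ) :
    Matrix (Fin p) (Fin p) ℝ :=
  if h : M.IsHermitian then
    (h.eigenvectorUnitary : Matrix (Fin p) (Fin p) ℝ) *
      Matrix.diagonal (fun i => max (h.eigenvalues i - τ) 0) *
      (star (h.eigenvectorUnitary : Matrix (Fin p) (Fin p) ℝ))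
  else 0

/-- The `p × r` matrix whose columns are (orthonormal) eigenvectors of the symmetric matrix
`M` corresponding to its `r` largest eigenvalues ("first `r` eigenvectors"). -/
noncomputable def topEigenvectors {p : ℕ} (M : Matrix (Fin p) (Fin p) ℝ) (r : ℕ) :
    Matrix (Fin p) (Fin r) ℝ :=
  if h : M.IsHermitian then
    Matrix.of fun i (j : Fin r) =>
      if hj : (j : ℕ) < p then
        (h.eigenvectorUnitary : Matrix (Fin p) (Fin p) ℝ) i
          ((Tuple.sort h.eigenvalues) (Fin.rev ⟨(j : ℕ), hj⟩))
      else 0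
  else 0

/-- The objective function `F(L, D) = τ ‖L‖_* + (1/2) ‖Σ - (L + D)‖_F²`. -/
noncomputable def objF {p : ℕ} (τ : ℝ) (S L D : Matrix (Fin p) (Fin p) ℝ) : ℝ :=
  τ * nucNorm L + (1 / 2) * (frobNorm (S - (L + D))) ^ 2

/-- `(L, D)` is a global minimizer of the relaxed-MTFA objective `F` over
`L ∈ S^p₊` and diagonal `D`. -/
def IsRMTFAMin {p : ℕ} (τ : ℝ) (S L D : Matrix (Fin p) (Fin p) ℝ) : Prop :=
  L.PosSemidef ∧ D = pdiag D ∧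
    ∀ L' D' : Matrix (Fin p) (Fin p) ℝ, L'.PosSemidef → D' = pdiag D' →
      objF τ S L D ≤ objF τ S L' D'

/-!
Minimising `F(L, D)` over the diagonal `D` leaves `G(L) = τ tr L + ‖poffdiag (Σ - L)‖² / 2` on the
positive semidefinite cone, a convex function whose gradient is `1`-Lipschitz. Since
`Σ - pdiag (Σ - L) = L + poffdiag (Σ - L)`, soft-thresholding this matrix amounts to projecting
`L - ∇G(L)` onto the cone: a sweep of the alternating minimisation is a projected gradient step of
unit length. Its three-point inequality makes the distances to a minimiser nonincreasing and
telescopes to `G(L_{k+1}) - G(L*) ≤ ‖L_0 - L*‖² / (2 (k + 1))`, well within `16 R² / k`. A cluster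
point of the bounded sequence is then a minimiser, hence is `L*`: the gradient `∇G(L*)` is positive
semidefinite and complementary to `L*`, and its diagonal entries all equal `τ > 0`, which rules out
a second minimiser.
-/

open Filter InnerProductSpace Topology
open scoped Matrix.Norms.Frobenius

lemma le_of_lowerSemicontinuousOn_of_mapClusterPt {ι X : Type*} [TopologicalSpace X] {l : Filter ι}
    {f : X → ℝ} {C : Set X} (hf : LowerSemicontinuousOn f C) {u : ι → X} (hu : ∀ i, u i ∈ C)
    {a : ℝ} (ha : Tendsto (fun i => f (u i)) l (𝓝 a)) {z : X} (hz : z ∈ C)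
    (hclus : MapClusterPt z l u) : f z ≤ a := by
  by_contra! hlt
  obtain ⟨c, hac, hcz⟩ := exists_between hlt
  have habove : ∀ᶠ v in 𝓝 z, v ∈ C → c < f v := eventually_nhdsWithin_iff.1 (hf z hz c hcz)
  obtain ⟨i, hi, hic⟩ :=
    ((hclus.frequently habove).and_eventually (ha.eventually_lt_const hac)).exists
  exact (hi (hu i)).not_gt hic


section ThreePointDescent

variable {α : Type*} [PseudoMetricSpace α]

/-- The points `x k` lie in `C` and satisfy the three-point inequality of proximal and projected
gradient methods for `f` on `C`, the step size being normalised to `1`. -/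
structure IsThreePointDescent (f : α → ℝ) (C : Set α) (x : ℕ → α) : Prop where
  mem (k : ℕ) : x k ∈ C
  three_point (k : ℕ) {y : α} (hy : y ∈ C) :
    f (x (k + 1)) + dist (x (k + 1)) y ^ 2 / 2 ≤ f y + dist (x k) y ^ 2 / 2

namespace IsThreePointDescent

variable {f : α → ℝ} {C : Set α} {x : ℕ → α} {y : α}

lemma antitone (h : IsThreePointDescent f C x) : Antitone fun k => f (x k) := by
  refine antitone_nat_of_succ_le fun k => ?_
  have := h.three_point k (h.mem k)
  rw [dist_self] at this
  linarith [sq_nonneg (dist (x (k + 1)) (x k))]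

lemma mul_gap_add_le (h : IsThreePointDescent f C x) (hy : y ∈ C) (k : ℕ) :
    k * (f (x k) - f y) + dist (x k) y ^ 2 / 2 ≤ dist (x 0) y ^ 2 / 2 := by
  induction k with
  | zero => simp
  | succ k ih =>
    have hdescent := mul_le_mul_of_nonneg_left (h.antitone k.le_succ) k.cast_nonneg
    have hstep := h.three_point k hy
    push_cast
    linarith

lemma gap_le (h : IsThreePointDescent f C x) (hy : y ∈ C) (k : ℕ) :
    f (x (k + 1)) - f y ≤ dist (x 0) y ^ 2 / 2 * (1 / (k + 1)) := by
  have := h.mul_gap_add_le hy (k + 1)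
  push_cast at this
  rw [mul_one_div, le_div_iff₀ (by positivity)]
  linarith [sq_nonneg (dist (x (k + 1)) y)]

lemma dist_le (h : IsThreePointDescent f C x) (hy : y ∈ C) (hmin : IsMinOn f C y) (k : ℕ) :
    dist (x k) y ≤ dist (x 0) y := by
  have hgap : 0 ≤ k * (f (x k) - f y) :=
    mul_nonneg k.cast_nonneg (sub_nonneg.2 (hmin (h.mem k)))
  exact (pow_le_pow_iff_left₀ dist_nonneg dist_nonneg two_ne_zero).1
    (by linarith [h.mul_gap_add_le hy k])

lemma tendsto_apply (h : IsThreePointDescent f C x) (hy : y ∈ C) (hmin : IsMinOn f C y) :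
    Tendsto (fun k => f (x k)) atTop (𝓝 (f y)) := by
  rw [← tendsto_add_atTop_iff_nat 1, ← tendsto_sub_nhds_zero_iff]
  refine squeeze_zero (fun k => sub_nonneg.2 (hmin (h.mem (k + 1)))) (h.gap_le hy) ?_
  simpa using (tendsto_one_div_add_atTop_nhds_zero_nat (𝕜 := ℝ)).const_mul (dist (x 0) y ^ 2 / 2)

lemma tendsto [ProperSpace α] (h : IsThreePointDescent f C x) (hC : IsClosed C)
    (hf : LowerSemicontinuousOn f C) (hy : y ∈ C) (hmin : IsMinOn f C y)
    (huniq : ∀ z ∈ C, IsMinOn f C z → z = y) : Tendsto x atTop (𝓝 y) := by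
  refine ((isCompact_closedBall y (dist (x 0) y)).inter_left hC).tendsto_nhds_of_unique_mapClusterPt
    (.of_forall fun k => ⟨h.mem k, h.dist_le hy hmin k⟩) fun z hz hclus => huniq z hz.1 ?_
  have hzy : f z ≤ f y :=
    le_of_lowerSemicontinuousOn_of_mapClusterPt hf h.mem (h.tendsto_apply hy hmin) hz.1 hclus
  exact fun w hw => hzy.trans (hmin hw)

end IsThreePointDescent

end ThreePointDescent

lemma three_point_of_projected_gradient {E : Type*} [NormedAddCommGroup E] [InnerProductSpace ℝ E]
    {f : E → ℝ} {g x y z : E} (hconvex : f x + ⟪g, y - x⟫_ℝ ≤ f y)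
    (hsmooth : f z ≤ f x + ⟪g, z - x⟫_ℝ + ‖z - x‖ ^ 2 / 2)
    (hproj : 0 ≤ ⟪g + (z - x), y - z⟫_ℝ) :
    f z + dist z y ^ 2 / 2 ≤ f y + dist x y ^ 2 / 2 := by
  have hsplit : y - x = (y - z) + (z - x) := by abel
  have hdist : dist x y ^ 2 = dist z y ^ 2 + 2 * ⟪z - x, y - z⟫_ℝ + ‖z - x‖ ^ 2 := by
    rw [dist_comm x, dist_comm z, dist_eq_norm, dist_eq_norm, hsplit, norm_add_sq_real,
      real_inner_comm]
  rw [hsplit, inner_add_right] at hconvex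
  rw [inner_add_left] at hproj
  linarith

section Frobenius

open scoped ComplexOrder MatrixOrder

variable {𝕜 m n : Type*} [RCLike 𝕜] [Fintype m] [Fintype n]

lemma frobenius_norm_sq (A : Matrix m n 𝕜) : ‖A‖ ^ 2 = ∑ i, ∑ j, ‖A i j‖ ^ 2 := by
  have hnonneg : 0 ≤ ∑ i, ∑ j, ‖A i j‖ ^ 2 := by positivity
  simp only [frobenius_norm_def, Real.rpow_two, ← Real.sqrt_eq_rpow, Real.sq_sqrt hnonneg]

/-- The trace inner product `⟪A, B⟫ = tr (Aᴴ B)`, which induces the Frobenius norm. -/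
noncomputable instance frobeniusInnerProductSpace : InnerProductSpace 𝕜 (Matrix m n 𝕜) where
  inner A B := (Aᴴ * B).trace
  norm_sq_eq_re_inner A := by
    rw [frobenius_norm_sq, Finset.sum_comm]
    simp [trace, mul_apply, RCLike.conj_mul, -map_pow, ← RCLike.ofReal_pow]
  conj_inner_symm A B := by
    rw [starRingEnd_apply, ← trace_conjTranspose, conjTranspose_mul, conjTranspose_conjTranspose]
  add_left A B C := by rw [conjTranspose_add, Matrix.add_mul, trace_add]
  smul_left A B r := by rw [conjTranspose_smul, Matrix.smul_mul, trace_smul, smul_eq_mul]; rfl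

lemma inner_eq_trace (A B : Matrix m n 𝕜) : ⟪A, B⟫_𝕜 = (Aᴴ * B).trace := rfl

lemma inner_conjTranspose_mul_self (A B : Matrix m n 𝕜) :
    ⟪Aᴴ * A, Bᴴ * B⟫_𝕜 = (‖A * Bᴴ‖ : 𝕜) ^ 2 := by
  rw [← inner_self_eq_norm_sq_to_K, inner_eq_trace, inner_eq_trace]
  simp only [conjTranspose_mul, conjTranspose_conjTranspose, Matrix.mul_assoc]
  rw [trace_mul_comm B]
  simp only [Matrix.mul_assoc]

variable {A B : Matrix n n 𝕜}

lemma exists_eq_conjTranspose_mul_self (hA : A.PosSemidef) : ∃ C : Matrix n n 𝕜, A = Cᴴ * C := by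
  classical
  exact CStarAlgebra.nonneg_iff_eq_star_mul_self.1 hA.nonneg

lemma inner_nonneg_of_posSemidef (hA : A.PosSemidef) (hB : B.PosSemidef) : 0 ≤ ⟪A, B⟫_𝕜 := by
  obtain ⟨C, rfl⟩ := exists_eq_conjTranspose_mul_self hA
  obtain ⟨D, rfl⟩ := exists_eq_conjTranspose_mul_self hB
  rw [inner_conjTranspose_mul_self, ← RCLike.ofReal_pow, RCLike.ofReal_nonneg]
  positivity

lemma mul_eq_zero_of_inner_eq_zero (hA : A.PosSemidef) (hB : B.PosSemidef) (h : ⟪A, B⟫_𝕜 = 0) :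
    A * B = 0 := by
  obtain ⟨C, rfl⟩ := exists_eq_conjTranspose_mul_self hA
  obtain ⟨D, rfl⟩ := exists_eq_conjTranspose_mul_self hB
  have hCD : C * Dᴴ = 0 := by simpa [inner_conjTranspose_mul_self] using h
  rw [Matrix.mul_assoc, ← Matrix.mul_assoc C, hCD, Matrix.zero_mul, Matrix.mul_zero]

lemma isClosed_setOf_posSemidef {n : Type*} [Finite n] :
    IsClosed {A : Matrix n n 𝕜 | A.PosSemidef} := by
  have := Fintype.ofFinite n
  have hcont (x : n → 𝕜) : Continuous fun A : Matrix n n 𝕜 => star x ⬝ᵥ (A *ᵥ x) := by fun_prop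
  have hherm : IsClosed {A : Matrix n n 𝕜 | A.IsHermitian} :=
    isClosed_eq continuous_id.matrix_conjTranspose continuous_id
  have hset : {A : Matrix n n 𝕜 | A.PosSemidef} =
      {A | A.IsHermitian} ∩ ⋂ x : n → 𝕜, {A | 0 ≤ star x ⬝ᵥ (A *ᵥ x)} := by
    ext A
    simp [posSemidef_iff_dotProduct_mulVec]
  rw [hset]
  exact hherm.inter (isClosed_iInter fun x => isClosed_le continuous_const (hcont x))

end Frobenius

section Spectral

lemma trace_cfc {𝕜 n : Type*} [RCLike 𝕜] [Fintype n] [DecidableEq n] {A : Matrix n n 𝕜}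
    (hA : A.IsHermitian) (f : ℝ → ℝ) : (cfc f A).trace = ∑ i, (f (hA.eigenvalues i) : 𝕜) := by
  rw [hA.cfc_eq, IsHermitian.cfc, Unitary.conjStarAlgAut_apply, trace_mul_cycle,
    Unitary.coe_star_mul_self, Matrix.one_mul, trace_diagonal]
  rfl

variable {p : ℕ} {L M X : Matrix (Fin p) (Fin p) ℝ} {τ : ℝ}

open scoped MatrixOrder in
lemma nucNorm_eq_trace (hL : L.PosSemidef) : nucNorm L = L.trace := by
  have hsqrt : cfc Real.sqrt (Lᴴ * L) = L := by
    rw [← cfcₙ_eq_cfc, ← CFC.sqrt_eq_real_sqrt _ (posSemidef_conjTranspose_mul_self L).nonneg,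
      hL.isHermitian.eq, CFC.sqrt_mul_self L hL.nonneg]
  conv_rhs => rw [← hsqrt, trace_cfc (posSemidef_conjTranspose_mul_self L).isHermitian]
  rfl

lemma softThresh_eq_cfc (τ : ℝ) (M : Matrix (Fin p) (Fin p) ℝ) :
    softThresh τ M = cfc (fun x => max (x - τ) 0) M := by
  by_cases hM : M.IsHermitian
  · rw [softThresh, dif_pos hM, hM.cfc_eq, IsHermitian.cfc, Unitary.conjStarAlgAut_apply]
    rfl
  · rw [softThresh, dif_neg hM]
    exact (cfc_apply_of_not_predicate M hM).symm

open scoped MatrixOrder in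
lemma posSemidef_softThresh (τ : ℝ) (M : Matrix (Fin p) (Fin p) ℝ) :
    (softThresh τ M).PosSemidef := by
  rw [softThresh_eq_cfc]
  exact (cfc_nonneg fun _ _ => le_max_right _ _).posSemidef

lemma smul_one_add_softThresh_sub_eq_cfc (hM : M.IsHermitian) :
    τ • (1 : Matrix (Fin p) (Fin p) ℝ) + softThresh τ M - M = cfc (fun x => max (τ - x) 0) M := by
  have hM' : IsSelfAdjoint M := hM
  have hfun : (fun x : ℝ => max (τ - x) 0) = fun x => τ + max (x - τ) 0 - x := by
    ext x
    rcases le_total x τ with h | h <;> simp [h]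
  rw [softThresh_eq_cfc, hfun, cfc_sub _ _, cfc_const_add _ _ _, cfc_id' ℝ M,
    Algebra.algebraMap_eq_smul_one]

open scoped MatrixOrder in
lemma posSemidef_smul_one_add_softThresh_sub (hM : M.IsHermitian) :
    (τ • (1 : Matrix (Fin p) (Fin p) ℝ) + softThresh τ M - M).PosSemidef := by
  rw [smul_one_add_softThresh_sub_eq_cfc hM]
  exact (cfc_nonneg fun _ _ => le_max_right _ _).posSemidef

lemma inner_smul_one_add_softThresh_sub_softThresh (hM : M.IsHermitian) :
    ⟪τ • (1 : Matrix (Fin p) (Fin p) ℝ) + softThresh τ M - M, softThresh τ M⟫_ℝ = 0 := by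
  have hzero : (fun x : ℝ => max (τ - x) 0 * max (x - τ) 0) = fun _ => 0 := by
    ext x
    rcases le_total x τ with h | h <;> simp [h]
  rw [inner_eq_trace, (posSemidef_smul_one_add_softThresh_sub hM).isHermitian.eq,
    smul_one_add_softThresh_sub_eq_cfc hM, softThresh_eq_cfc, ← cfc_mul _ _ M, hzero,
    cfc_const_zero, trace_zero]

lemma inner_sub_softThresh_nonneg (hM : M.IsHermitian) (hX : X.PosSemidef) :
    0 ≤ ⟪τ • (1 : Matrix (Fin p) (Fin p) ℝ) + softThresh τ M - M, X - softThresh τ M⟫_ℝ := by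
  rw [inner_sub_right, inner_smul_one_add_softThresh_sub_softThresh hM, sub_zero]
  exact inner_nonneg_of_posSemidef (posSemidef_smul_one_add_softThresh_sub hM) hX

end Spectral

section Diagonal

variable {p : ℕ}

lemma pdiag_eq_diagonal (M : Matrix (Fin p) (Fin p) ℝ) : pdiag M = diagonal M.diag := by
  ext i j
  rcases eq_or_ne i j with rfl | hij
  · simp [pdiag]
  · simp [pdiag, hij]

lemma pdiag_sub (A B : Matrix (Fin p) (Fin p) ℝ) : pdiag (A - B) = pdiag A - pdiag B := by
  simp only [pdiag_eq_diagonal, diag_sub, diagonal_sub, Pi.sub_def]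

lemma pdiag_pdiag (M : Matrix (Fin p) (Fin p) ℝ) : pdiag (pdiag M) = pdiag M := by
  simp only [pdiag_eq_diagonal, diag_diagonal]

lemma isHermitian_pdiag (M : Matrix (Fin p) (Fin p) ℝ) : (pdiag M).IsHermitian := by
  rw [pdiag_eq_diagonal]
  exact isHermitian_diagonal _

lemma continuous_pdiag : Continuous (pdiag : Matrix (Fin p) (Fin p) ℝ → _) := by
  simp only [funext pdiag_eq_diagonal]
  fun_prop

lemma pdiag_add_poffdiag (M : Matrix (Fin p) (Fin p) ℝ) : pdiag M + poffdiag M = M :=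
  add_sub_cancel _ _

lemma poffdiag_sub (A B : Matrix (Fin p) (Fin p) ℝ) :
    poffdiag (A - B) = poffdiag A - poffdiag B := by
  simp only [poffdiag, pdiag_sub]
  abel

lemma inner_pdiag_poffdiag (A B : Matrix (Fin p) (Fin p) ℝ) : ⟪pdiag A, poffdiag B⟫_ℝ = 0 := by
  rw [inner_eq_trace, (isHermitian_pdiag A).eq, pdiag_eq_diagonal]
  simp [trace, diagonal_mul, poffdiag, pdiag]

lemma inner_poffdiag_left (A B : Matrix (Fin p) (Fin p) ℝ) :
    ⟪poffdiag A, B⟫_ℝ = ⟪poffdiag A, poffdiag B⟫_ℝ := by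
  conv_lhs => rw [← pdiag_add_poffdiag B]
  rw [inner_add_right, real_inner_comm, inner_pdiag_poffdiag, zero_add]

lemma norm_sq_eq_pdiag_add_poffdiag (M : Matrix (Fin p) (Fin p) ℝ) :
    ‖M‖ ^ 2 = ‖pdiag M‖ ^ 2 + ‖poffdiag M‖ ^ 2 := by
  conv_lhs => rw [← pdiag_add_poffdiag M]
  rw [norm_add_sq_real, inner_pdiag_poffdiag, mul_zero, add_zero]

lemma eq_diagonal_of_poffdiag_eq_zero {M : Matrix (Fin p) (Fin p) ℝ} (hM : poffdiag M = 0) :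
    M = diagonal M.diag := by
  rw [← pdiag_eq_diagonal]
  exact sub_eq_zero.1 hM

lemma eq_zero_of_mul_diagonal_eq_zero {n R : Type*} [Fintype n] [DecidableEq n]
    [NonUnitalNonAssocSemiring R] [NoZeroDivisors R] {Z : Matrix n n R} {d : n → R}
    (hZ : ∀ i, Z i i ≠ 0) (h : Z * diagonal d = 0) : d = 0 := by
  ext i
  have hentry := congr_fun₂ h i i
  rw [mul_diagonal] at hentry
  exact (mul_eq_zero.1 hentry).resolve_left (hZ i)

lemma frobNorm_eq_norm {q : ℕ} (M : Matrix (Fin p) (Fin q) ℝ) : frobNorm M = ‖M‖ := by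
  rw [frobNorm, ← Real.sqrt_sq (norm_nonneg M), frobenius_norm_sq]
  simp only [Real.norm_eq_abs, sq_abs]

end Diagonal

section ReducedObjective

variable {p : ℕ} {τ : ℝ} {S L X D : Matrix (Fin p) (Fin p) ℝ}

/-- The objective `F(L, D)` of `objF` minimised over the diagonal matrices `D`, as a function of
`L ∈ S^p₊`, where the nuclear norm is the trace. -/
noncomputable def reducedObj (τ : ℝ) (S L : Matrix (Fin p) (Fin p) ℝ) : ℝ :=
  τ * L.trace + ‖poffdiag (S - L)‖ ^ 2 / 2

/-- The gradient of `reducedObj τ S` at `L` for the trace inner product. -/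
noncomputable def reducedGrad (τ : ℝ) (S L : Matrix (Fin p) (Fin p) ℝ) :
    Matrix (Fin p) (Fin p) ℝ :=
  τ • 1 - poffdiag (S - L)

/-- One sweep of the alternating minimisation, from `L^{(k)}` to `L^{(k+1)}`. -/
noncomputable def altStep (τ : ℝ) (S L : Matrix (Fin p) (Fin p) ℝ) : Matrix (Fin p) (Fin p) ℝ :=
  softThresh τ (S - pdiag (S - L))

lemma reducedGrad_apply_self (τ : ℝ) (S L : Matrix (Fin p) (Fin p) ℝ) (i : Fin p) :
    reducedGrad τ S L i i = τ := by
  simp [reducedGrad, poffdiag, pdiag]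

lemma objF_eq (hL : L.PosSemidef) (hD : D = pdiag D) :
    objF τ S L D = reducedObj τ S L + ‖pdiag (S - L) - D‖ ^ 2 / 2 := by
  have hdiag : pdiag (S - L - D) = pdiag (S - L) - D := by rw [pdiag_sub, ← hD]
  have hoff : poffdiag (S - L - D) = poffdiag (S - L) := by
    rw [poffdiag, hdiag, poffdiag]
    abel
  rw [objF, reducedObj, nucNorm_eq_trace hL, frobNorm_eq_norm, ← sub_sub,
    norm_sq_eq_pdiag_add_poffdiag, hdiag, hoff]
  ring

lemma objF_pdiag (hL : L.PosSemidef) : objF τ S L (pdiag (S - L)) = reducedObj τ S L := by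
  simp [objF_eq hL (pdiag_pdiag (S - L)).symm]

lemma reducedObj_eq_add (τ : ℝ) (S L X : Matrix (Fin p) (Fin p) ℝ) :
    reducedObj τ S X =
      reducedObj τ S L + ⟪reducedGrad τ S L, X - L⟫_ℝ + ‖poffdiag (X - L)‖ ^ 2 / 2 := by
  have hoff : poffdiag (S - X) = poffdiag (S - L) - poffdiag (X - L) := by
    rw [← poffdiag_sub, sub_sub_sub_cancel_right]
  have htrace : ⟪τ • (1 : Matrix (Fin p) (Fin p) ℝ), X - L⟫_ℝ = τ * X.trace - τ * L.trace := by
    simp [inner_eq_trace, mul_sub]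
  rw [reducedObj, reducedObj, reducedGrad, inner_sub_left, htrace, inner_poffdiag_left, hoff,
    norm_sub_sq_real]
  ring

lemma continuous_reducedObj (τ : ℝ) (S : Matrix (Fin p) (Fin p) ℝ) :
    Continuous (reducedObj τ S) := by
  have := continuous_pdiag (p := p)
  unfold reducedObj poffdiag
  fun_prop

lemma smul_one_add_altStep_sub (τ : ℝ) (S L : Matrix (Fin p) (Fin p) ℝ) :
    τ • 1 + altStep τ S L - (S - pdiag (S - L)) = reducedGrad τ S L + (altStep τ S L - L) := by
  rw [reducedGrad, poffdiag]
  abel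

/-- `altStep` is the projection of `L - reducedGrad τ S L` onto the positive semidefinite cone. -/
lemma inner_reducedGrad_add_altStep_sub_nonneg (hS : S.IsHermitian) (hX : X.PosSemidef) :
    0 ≤ ⟪reducedGrad τ S L + (altStep τ S L - L), X - altStep τ S L⟫_ℝ := by
  rw [← smul_one_add_altStep_sub]
  exact inner_sub_softThresh_nonneg (hS.sub (isHermitian_pdiag (S - L))) hX

lemma reducedObj_altStep_three_point (hS : S.IsHermitian) (hX : X.PosSemidef) :
    reducedObj τ S (altStep τ S L) + dist (altStep τ S L) X ^ 2 / 2 ≤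
      reducedObj τ S X + dist L X ^ 2 / 2 := by
  refine three_point_of_projected_gradient (g := reducedGrad τ S L) ?_ ?_
    (inner_reducedGrad_add_altStep_sub_nonneg hS hX)
  · rw [reducedObj_eq_add τ S L X]
    linarith [sq_nonneg ‖poffdiag (X - L)‖]
  · rw [reducedObj_eq_add τ S L (altStep τ S L), norm_sq_eq_pdiag_add_poffdiag (altStep τ S L - L)]
    linarith [sq_nonneg ‖pdiag (altStep τ S L - L)‖]

lemma altStep_eq_self_of_isMinOn (hS : S.IsHermitian) (hL : L.PosSemidef)
    (hmin : IsMinOn (reducedObj τ S) {A | A.PosSemidef} L) : altStep τ S L = L := by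
  have hstep := reducedObj_altStep_three_point (τ := τ) (L := L) hS hL
  have hle : reducedObj τ S L ≤ reducedObj τ S (altStep τ S L) := hmin (posSemidef_softThresh _ _)
  rw [dist_self] at hstep
  have hsq : dist (altStep τ S L) L ^ 2 = 0 :=
    le_antisymm (by linarith) (sq_nonneg _)
  exact dist_eq_zero.1 (sq_eq_zero_iff.1 hsq)

lemma posSemidef_reducedGrad_of_altStep_eq_self (hS : S.IsHermitian) (hL : altStep τ S L = L) :
    (reducedGrad τ S L).PosSemidef := by
  have h := posSemidef_smul_one_add_softThresh_sub (τ := τ) (hS.sub (isHermitian_pdiag (S - L)))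
  rwa [← altStep, smul_one_add_altStep_sub, hL, sub_self, add_zero] at h

lemma inner_reducedGrad_self_of_altStep_eq_self (hS : S.IsHermitian) (hL : altStep τ S L = L) :
    ⟪reducedGrad τ S L, L⟫_ℝ = 0 := by
  have h := inner_smul_one_add_softThresh_sub_softThresh (τ := τ)
    (hS.sub (isHermitian_pdiag (S - L)))
  rwa [← altStep, smul_one_add_altStep_sub, hL, sub_self, add_zero] at h

/-- The gradient `Z` at `L` is positive semidefinite with `⟪Z, L⟫ = 0`, so a second minimiser `X`
differs from `L` by a diagonal matrix killed by `Z`, whose diagonal entries all equal `τ`. -/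
lemma eq_of_isMinOn_reducedObj (hS : S.IsHermitian) (hτ : τ ≠ 0) (hL : L.PosSemidef)
    (hminL : IsMinOn (reducedObj τ S) {A | A.PosSemidef} L) (hX : X.PosSemidef)
    (hminX : IsMinOn (reducedObj τ S) {A | A.PosSemidef} X) : X = L := by
  have hfix := altStep_eq_self_of_isMinOn hS hL hminL
  have hgrad := posSemidef_reducedGrad_of_altStep_eq_self hS hfix
  have hcompl := inner_reducedGrad_self_of_altStep_eq_self hS hfix
  have hexpand := reducedObj_eq_add τ S L X
  have hle : reducedObj τ S X ≤ reducedObj τ S L := hminX hL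
  rw [inner_sub_right, hcompl, sub_zero] at hexpand
  have hinner := inner_nonneg_of_posSemidef hgrad hX
  have hoff_nonneg := sq_nonneg ‖poffdiag (X - L)‖
  have hinner_zero : ⟪reducedGrad τ S L, X⟫_ℝ = 0 := by linarith
  have hoff : poffdiag (X - L) = 0 :=
    norm_eq_zero.1 (sq_eq_zero_iff.1 (by linarith))
  have hmul : reducedGrad τ S L * (X - L) = 0 := by
    rw [Matrix.mul_sub, mul_eq_zero_of_inner_eq_zero hgrad hX hinner_zero,
      mul_eq_zero_of_inner_eq_zero hgrad hL hcompl, sub_zero]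
  have hdiag := eq_diagonal_of_poffdiag_eq_zero hoff
  have hgrad_ne (i : Fin p) : reducedGrad τ S L i i ≠ 0 := by rwa [reducedGrad_apply_self]
  rw [hdiag] at hmul
  rw [eq_zero_of_mul_diagonal_eq_zero hgrad_ne hmul, diagonal_zero'] at hdiag
  exact sub_eq_zero.1 hdiag

lemma isThreePointDescent_reducedObj (hS : S.IsHermitian) {Lseq : ℕ → Matrix (Fin p) (Fin p) ℝ}
    (hL0 : (Lseq 0).PosSemidef) (hstep : ∀ k, Lseq (k + 1) = altStep τ S (Lseq k)) :
    IsThreePointDescent (reducedObj τ S) {A | A.PosSemidef} Lseq where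
  mem
    | 0 => hL0
    | k + 1 => by
      rw [hstep]
      exact posSemidef_softThresh _ _
  three_point k X hX := by
    rw [hstep]
    exact reducedObj_altStep_three_point hS hX

lemma tendsto_of_isThreePointDescent_reducedObj {Lseq : ℕ → Matrix (Fin p) (Fin p) ℝ}
    (hS : S.IsHermitian) (hτ : τ ≠ 0)
    (h : IsThreePointDescent (reducedObj τ S) {A | A.PosSemidef} Lseq) (hL : L.PosSemidef)
    (hmin : IsMinOn (reducedObj τ S) {A | A.PosSemidef} L) : Tendsto Lseq atTop (𝓝 L) := by
  have : ProperSpace (Matrix (Fin p) (Fin p) ℝ) := FiniteDimensional.proper_real _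
  exact h.tendsto isClosed_setOf_posSemidef
    (continuous_reducedObj τ S).continuousOn.lowerSemicontinuousOn hL hmin
    fun X hX hminX => eq_of_isMinOn_reducedObj hS hτ hL hmin hX hminX

lemma tendsto_sqrt_norm_sub_sq_add {Lseq : ℕ → Matrix (Fin p) (Fin p) ℝ}
    (h : Tendsto Lseq atTop (𝓝 L)) (S : Matrix (Fin p) (Fin p) ℝ) :
    Tendsto (fun k => √(‖Lseq k - L‖ ^ 2 + ‖pdiag (S - Lseq k) - pdiag (S - L)‖ ^ 2)) atTop
      (𝓝 0) := by
  have hpdiag := continuous_pdiag (p := p)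
  have hcont : Continuous fun X => √(‖X - L‖ ^ 2 + ‖pdiag (S - X) - pdiag (S - L)‖ ^ 2) := by
    fun_prop
  simpa [Function.comp_def] using (hcont.tendsto L).comp h

end ReducedObjective

namespace IsRMTFAMin

variable {p : ℕ} {τ : ℝ} {S L D : Matrix (Fin p) (Fin p) ℝ}

lemma eq_pdiag (h : IsRMTFAMin τ S L D) : D = pdiag (S - L) := by
  obtain ⟨hL, hD, hmin⟩ := h
  have hle := hmin L (pdiag (S - L)) hL (pdiag_pdiag _).symm
  rw [objF_pdiag hL, objF_eq hL hD] at hle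
  have hsq : ‖pdiag (S - L) - D‖ ^ 2 = 0 := le_antisymm (by linarith) (sq_nonneg _)
  exact (sub_eq_zero.1 (norm_eq_zero.1 (sq_eq_zero_iff.1 hsq))).symm

lemma isMinOn_reducedObj (h : IsRMTFAMin τ S L D) :
    IsMinOn (reducedObj τ S) {A | A.PosSemidef} L := by
  intro X hX
  have hle := h.2.2 X (pdiag (S - X)) hX (pdiag_pdiag _).symm
  rwa [h.eq_pdiag, objF_pdiag h.1, objF_pdiag hX] at hle

end IsRMTFAMin

/-- convergence of the alternating-minimization algorithm: the iterates
`L^{(k)} = D_τ⁺(Σ − D^{(k−1)})`, `D^{(k)} = pdiag(Σ − L^{(k)})` converge to the unique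
minimizer `x* = (L*, D*)`, with rate
`F(x_{k+1}) − F(x*) ≤ max{(F(x₀) − F(x*))/2^k, 16R²/k}`. -/
theorem rmtfa_alternating_convergence (p : ℕ) (S : Matrix (Fin p) (Fin p) ℝ)
    (hS : S.IsHermitian) (τ : ℝ) (hτ : 0 < τ)
    (Lseq Dseq : ℕ → Matrix (Fin p) (Fin p) ℝ)
    (hL0 : (Lseq 0).PosSemidef) (hD0 : Dseq 0 = pdiag (S - Lseq 0))
    (hLit : ∀ k : ℕ, Lseq (k + 1) = softThresh τ (S - Dseq k))
    (hDit : ∀ k : ℕ, Dseq (k + 1) = pdiag (S - Lseq (k + 1)))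
    (Lstar Dstar : Matrix (Fin p) (Fin p) ℝ) (hmin : IsRMTFAMin τ S Lstar Dstar)
    (R : ℝ)
    (hR : IsGreatest
      {c : ℝ | ∃ L D : Matrix (Fin p) (Fin p) ℝ, L.PosSemidef ∧ D = pdiag D ∧
        objF τ S L D ≤ objF τ S (Lseq 0) (Dseq 0) ∧
        c = Real.sqrt ((frobNorm (L - Lstar)) ^ 2 + (frobNorm (D - Dstar)) ^ 2)} R) :
    (∀ ε : ℝ, 0 < ε → ∃ N : ℕ, ∀ k : ℕ, N ≤ k →
      Real.sqrt ((frobNorm (Lseq k - Lstar)) ^ 2 + (frobNorm (Dseq k - Dstar)) ^ 2) < ε) ∧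
    (∀ k : ℕ, 1 ≤ k →
      objF τ S (Lseq (k + 1)) (Dseq (k + 1)) - objF τ S Lstar Dstar ≤
        max ((objF τ S (Lseq 0) (Dseq 0) - objF τ S Lstar Dstar) / 2 ^ k)
          (16 * R ^ 2 / k)) := by
  have hD (k : ℕ) : Dseq k = pdiag (S - Lseq k) := by
    cases k with
    | zero => exact hD0
    | succ k => exact hDit k
  have hdescent := isThreePointDescent_reducedObj hS hL0 fun k => by rw [hLit, hD, altStep]
  obtain rfl := hmin.eq_pdiag
  simp only [frobNorm_eq_norm, hD] at hR ⊢
  constructor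
  · have hlim := tendsto_of_isThreePointDescent_reducedObj hS hτ.ne' hdescent hmin.1
      hmin.isMinOn_reducedObj
    exact fun ε hε =>
      eventually_atTop.1 ((tendsto_sqrt_norm_sub_sq_add hlim S).eventually_lt_const hε)
  · intro k hk
    have hdist : dist (Lseq 0) Lstar ≤ R := by
      rw [dist_eq_norm]
      exact (Real.le_sqrt_of_sq_le (le_add_of_nonneg_right (sq_nonneg _))).trans
        (hR.2 ⟨Lseq 0, _, hL0, (pdiag_pdiag _).symm, le_rfl, rfl⟩)
    simp only [objF_pdiag (hdescent.mem _), objF_pdiag hmin.1]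
    refine (hdescent.gap_le hmin.1 k).trans (le_max_of_le_right ?_)
    rw [mul_one_div]
    gcongr
    · linarith [pow_le_pow_left₀ dist_nonneg hdist 2, sq_nonneg R]
    · linarith
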